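/- There is an absolute constant c > 0 such that the following holds. Let n ≥ 2, k, d be positive integers, and let H_1, …, H_k be 3-uniform hypergraph matchings on [n] such that for every pair {u,v} ⊆ [n], Σ_{i=1}^k |{C ∈ H_i : {u,v} ⊆ C}| ≤ d. For b ∈ {-1,1}^k define f_b(x) := Σ_{i=1}^k b_i Σ_{C∈H_i} ∏_{v∈C} x_v and val(f_b) := max_{x∈{-1,1}^n} f_b(x). Then E_{b uniform in {-1,1}^k}[val(f_b)] ≤ c · n · √k · d · (nk)^{1/8} · (log n)^{1/4}. -/

import Mathlib

open Finset
open scoped Classical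

noncomputable section

/-- The map sending a Boolean to the corresponding element of `{-1, 1} ⊆ ℝ`. -/
def pmo (b : Bool) : ℝ := if b then 1 else -1

/-- `H` is a `q`-uniform hypergraph matching on `[n]`. -/
def IsMatching {n : ℕ} (q : ℕ) (H : Finset (Finset (Fin n))) : Prop :=
  (∀ C ∈ H, C.card = q) ∧ Set.Pairwise (H : Set (Finset (Fin n))) Disjoint

open scoped BigOperators

/-!
By Cauchy–Schwarz over one vertex `u` of each hyperedge, `f_b(x) ^ 2` is at most a diagonal term
plus `n * ∑_{i ≠ j} b_i b_j ∑_u L_{i,u}(x) L_{j,u}(x)`, where `L_{i,u}` is the quadratic form of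
the link of `u` in `H_i`. A random bipartition of the colours decouples the two signs, and for
fixed signs `b_j` it remains to bound a Rademacher sum of quartic forms at the maximiser `x`,
which depends on the signs.

Lift the quartic form of colour `i` to a symmetric Kikuchi matrix on pairs of `ℓ`-tuples of
vertices, in which a move rewrites one entry of each tuple. The pair condition bounds the average
row sum of this matrix by `O(d)`; deleting the pairs of tuples of too large degree, and dividing
every surviving entry by the probability of its survival, bounds all row sums without changing the
quadratic form on sign vectors. The moment method then bounds the norm of the signed sum of these
matrices at the cost of a factor of order `√(k ℓ log n)`. The choice `ℓ ≈ √(n / k)` gives the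
theorem.
-/

section Averages

lemma pow_expect_le_expect_pow_of_even {Ω : Type*} [Fintype Ω] [Nonempty Ω] (f : Ω → ℝ) {p : ℕ}
    (hp : Even p) : (𝔼 ω, f ω) ^ p ≤ 𝔼 ω, f ω ^ p := by
  have hcard : (Fintype.card Ω : ℝ) ≠ 0 := by positivity
  have h := Real.pow_arith_mean_le_arith_mean_pow_of_even univ
    (fun _ => (Fintype.card Ω : ℝ)⁻¹) f (fun _ _ => by positivity) (by simp [hcard]) hp
  simpa only [← mul_sum, Fintype.expect_eq_sum_div_card, div_eq_inv_mul] using h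

variable {ι Y M : Type*} [AddCommMonoid M] [Module ℚ≥0 M]

lemma expect_expect_fst_of_involutive {α β : Type*} [Fintype α] [Fintype β] [Nonempty β]
    {σ : α × β → α × β} (hσ : Function.Involutive σ) (G : α → M) :
    𝔼 a, 𝔼 b, G (σ (a, b)).1 = 𝔼 a, G a :=
  calc 𝔼 a, 𝔼 b, G (σ (a, b)).1
      = 𝔼 P, G (σ P).1 := by rw [← univ_product_univ, expect_product]
    _ = 𝔼 P : α × β, G P.1 := Fintype.expect_equiv hσ.toPerm _ _ fun _ => rfl
    _ = 𝔼 a, G a := by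
        rw [← univ_product_univ, expect_product]
        simp only [Fintype.expect_const]

variable [Fintype ι] [DecidableEq ι] [Fintype Y] [Nonempty Y]

lemma expect_update (i : ι) (G : (ι → Y) → M) :
    𝔼 T, 𝔼 y, G (Function.update T i y) = 𝔼 T, G T :=
  expect_expect_fst_of_involutive
    (σ := fun P : (ι → Y) × Y => (Function.update P.1 i P.2, P.1 i)) (fun P => by simp) G

lemma expect_piecewise (s : Finset ι) (G : (ι → Y) → M) :
    𝔼 T, 𝔼 T', G (s.piecewise T' T) = 𝔼 T, G T :=
  expect_expect_fst_of_involutive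
    (σ := fun P : (ι → Y) × (ι → Y) => (s.piecewise P.2 P.1, s.piecewise P.1 P.2))
    (fun P => by ext i <;> by_cases hi : i ∈ s <;> simp [hi]) G

lemma expect_apply (i : ι) (f : Y → M) : 𝔼 T : ι → Y, f (T i) = 𝔼 y, f y := by
  rw [← expect_update i]
  simp only [Function.update_self, Fintype.expect_const]

lemma expect_apply_apply {i j : ι} (hij : i ≠ j) (f : Y → Y → M) :
    𝔼 T : ι → Y, f (T i) (T j) = 𝔼 y, 𝔼 y', f y y' := by
  rw [← expect_update j]
  simp only [Function.update_self, Function.update_of_ne hij]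
  exact expect_apply i fun y => 𝔼 y', f y y'

end Averages

section Signs

lemma pmo_sq (b : Bool) : pmo b ^ 2 = 1 := by cases b <;> simp [pmo]

lemma abs_pmo (b : Bool) : |pmo b| = 1 := by cases b <;> simp [pmo]

lemma expect_bool (f : Bool → ℝ) : 𝔼 b, f b = (f true + f false) / 2 := by
  rw [Fintype.expect_eq_sum_div_card, Fintype.sum_bool, Fintype.card_bool, Nat.cast_ofNat]

variable {ι : Type*} [Fintype ι] [DecidableEq ι]

lemma expect_prod_apply {Y : Type*} [Fintype Y] (f : ι → Y → ℝ) :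
    𝔼 T : ι → Y, ∏ i, f i (T i) = ∏ i, 𝔼 y, f i y := by
  simp only [Fintype.expect_eq_sum_div_card, prod_div_distrib, prod_const, prod_univ_sum,
    Fintype.piFinset_univ, Fintype.card_fun, Nat.cast_pow, card_univ]

lemma expect_prod_pmo_nonneg {τ : Type*} [Fintype τ] (w : τ → ι) :
    0 ≤ 𝔼 ε : ι → Bool, ∏ t, pmo (ε (w t)) := by
  have hfiber (ε : ι → Bool) :
      ∏ t, pmo (ε (w t)) = ∏ i, pmo (ε i) ^ #{t | w t = i} := by
    rw [← prod_fiberwise univ w]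
    refine prod_congr rfl fun i _ => ?_
    rw [prod_congr rfl fun t ht => by rw [(mem_filter.1 ht).2], prod_const]
  simp only [hfiber]
  rw [expect_prod_apply fun i b => pmo b ^ #{t | w t = i}]
  refine prod_nonneg fun i _ => ?_
  rw [expect_bool]
  rcases Nat.even_or_odd #{t | w t = i} with h | h <;> simp [pmo, h.neg_one_pow]

lemma expect_exp_sum_pmo (r : ℝ) :
    𝔼 ε : ι → Bool, Real.exp (r * ∑ i, pmo (ε i)) = Real.cosh r ^ Fintype.card ι := by
  simp only [mul_sum, Real.exp_sum]
  rw [expect_prod_apply fun _ b => Real.exp (r * pmo b)]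
  simp only [expect_bool, pmo]
  simp [Real.cosh_eq, div_pow]

lemma pow_le_factorial_mul_cosh (x : ℝ) (q : ℕ) :
    x ^ (2 * q) ≤ (2 * q).factorial * Real.cosh x := by
  have hterm : x ^ (2 * q) / (2 * q).factorial ≤ Real.cosh x :=
    le_hasSum (Real.hasSum_cosh x) q fun j _ =>
      div_nonneg ((even_two_mul j).pow_nonneg x) (Nat.cast_nonneg _)
  rwa [div_le_iff₀' (by positivity)] at hterm

lemma expect_cosh_sum_pmo_le (r : ℝ) :
    𝔼 ε : ι → Bool, Real.cosh (r * ∑ i, pmo (ε i)) ≤ Real.exp (Fintype.card ι * (r ^ 2 / 2)) :=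
  calc 𝔼 ε : ι → Bool, Real.cosh (r * ∑ i, pmo (ε i))
      = (𝔼 ε : ι → Bool, Real.exp (r * ∑ i, pmo (ε i))
          + 𝔼 ε : ι → Bool, Real.exp (-r * ∑ i, pmo (ε i))) / 2 := by
        simp only [Real.cosh_eq, ← expect_div, expect_add_distrib, neg_mul]
    _ = Real.cosh r ^ Fintype.card ι := by
        rw [expect_exp_sum_pmo, expect_exp_sum_pmo, Real.cosh_neg, add_self_div_two]
    _ ≤ Real.exp (r ^ 2 / 2) ^ Fintype.card ι :=
        pow_le_pow_left₀ (Real.cosh_pos r).le (Real.cosh_le_exp_half_sq r) _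
    _ = Real.exp (Fintype.card ι * (r ^ 2 / 2)) := (Real.exp_nat_mul _ _).symm

lemma expect_sum_pmo_pow_le [Nonempty ι] (q : ℕ) (hq : 0 < q) :
    𝔼 ε : ι → Bool, (∑ i, pmo (ε i)) ^ (2 * q) ≤
      (2 * q * Fintype.card ι * Real.exp 1) ^ q := by
  set k : ℝ := (Fintype.card ι : ℝ)
  have hk : 0 < k := Nat.cast_pos.2 Fintype.card_pos
  have : (0 : ℝ) < q := Nat.cast_pos.2 hq
  set r : ℝ := √(2 * q / k)
  have hr : r ^ 2 = 2 * q / k := Real.sq_sqrt (by positivity)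
  have hfact : ((2 * q).factorial : ℝ) ≤ (2 * q : ℝ) ^ (2 * q) := by
    exact_mod_cast Nat.factorial_le_pow (2 * q)
  have hscaled : (2 * q / k) ^ q * 𝔼 ε : ι → Bool, (∑ i, pmo (ε i)) ^ (2 * q) ≤
      (2 * q : ℝ) ^ (2 * q) * Real.exp 1 ^ q :=
    calc (2 * q / k) ^ q * 𝔼 ε : ι → Bool, (∑ i, pmo (ε i)) ^ (2 * q)
        = 𝔼 ε : ι → Bool, (r * ∑ i, pmo (ε i)) ^ (2 * q) := by
          simp only [mul_pow, ← mul_expect, pow_mul, hr]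
      _ ≤ 𝔼 ε : ι → Bool, (2 * q).factorial * Real.cosh (r * ∑ i, pmo (ε i)) :=
          expect_le_expect fun ε _ => pow_le_factorial_mul_cosh _ q
      _ ≤ (2 * q : ℝ) ^ (2 * q) * Real.exp (k * (r ^ 2 / 2)) := by
          rw [← mul_expect]
          exact mul_le_mul hfact (expect_cosh_sum_pmo_le r)
            (expect_nonneg fun ε _ => (Real.cosh_pos _).le) (by positivity)
      _ = (2 * q : ℝ) ^ (2 * q) * Real.exp 1 ^ q := by
          rw [hr, ← Real.exp_nat_mul]
          field_simp
  rw [← mul_le_mul_iff_right₀ (show 0 < (2 * q / k) ^ q by positivity)]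
  refine hscaled.trans_eq ?_
  rw [pow_mul, ← mul_pow, ← mul_pow]
  field_simp

end Signs

section TraceMethod

open Matrix

lemma sum_smul_pow {ι 𝕜 R : Type*} [Fintype ι] [CommSemiring 𝕜] [Semiring R] [Algebra 𝕜 R]
    (s : ι → 𝕜) (A : ι → R) (p : ℕ) :
    (∑ i, s i • A i) ^ p =
      ∑ w : Fin p → ι, (∏ t, s (w t)) • (List.ofFn fun t => A (w t)).prod := by
  induction p with
  | zero => simp
  | succ p ih =>
    rw [pow_succ', ih, ← (Fin.consEquiv fun _ => ι).sum_comp, Fintype.sum_prod_type, sum_mul_sum]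
    simp [Fin.prod_univ_succ, List.ofFn_succ, smul_smul, mul_comm]

lemma dotProduct_sq_le {V : Type*} [Fintype V] (x y : V → ℝ) :
    (x ⬝ᵥ y) ^ 2 ≤ (x ⬝ᵥ x) * (y ⬝ᵥ y) := by
  simpa only [dotProduct, sq] using sum_mul_sq_le_sq_mul_sq univ x y

lemma dotProduct_self_nonneg {V : Type*} [Fintype V] (x : V → ℝ) : 0 ≤ x ⬝ᵥ x :=
  sum_nonneg fun _ _ => mul_self_nonneg _

variable {ι V : Type*} [Fintype ι] [DecidableEq ι] [Fintype V] [DecidableEq V]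

lemma sum_abs_list_prod_apply_le {g : ℝ} (hg : 0 ≤ g) {l : List (Matrix V V ℝ)}
    (hl : ∀ A ∈ l, ∀ v, ∑ w, |A v w| ≤ g) (v : V) : ∑ w, |l.prod v w| ≤ g ^ l.length := by
  induction l generalizing v with
  | nil => simp [one_apply, apply_ite abs]
  | cons A l ih =>
    rw [List.forall_mem_cons] at hl
    calc ∑ w, |(A :: l).prod v w|
        ≤ ∑ w, ∑ u, |A v u| * |l.prod u w| := by
          simp only [List.prod_cons, mul_apply, ← abs_mul]
          exact sum_le_sum fun w _ => abs_sum_le_sum_abs _ _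
      _ = ∑ u, |A v u| * ∑ w, |l.prod u w| := by
          rw [sum_comm]
          simp only [mul_sum]
      _ ≤ (∑ u, |A v u|) * g ^ l.length := by
          rw [sum_mul]
          gcongr with u
          exact ih hl.2 u
      _ ≤ g ^ (A :: l).length := by
          rw [List.length_cons, pow_succ']
          gcongr
          exact hl.1 v

lemma trace_list_prod_le {g : ℝ} (hg : 0 ≤ g) {l : List (Matrix V V ℝ)}
    (hl : ∀ A ∈ l, ∀ v, ∑ w, |A v w| ≤ g) : l.prod.trace ≤ Fintype.card V * g ^ l.length := by
  rw [← nsmul_eq_mul, ← card_univ, trace]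
  refine sum_le_card_nsmul _ _ _ fun v _ => (le_abs_self _).trans ?_
  exact (single_le_sum (f := fun w => |l.prod v w|) (fun _ _ => abs_nonneg _)
    (mem_univ v)).trans (sum_abs_list_prod_apply_le hg hl v)

lemma expect_trace_pow_le {g : ℝ} (hg : 0 ≤ g) {A : ι → Matrix V V ℝ}
    (hA : ∀ i v, ∑ w, |A i v w| ≤ g) (p : ℕ) :
    𝔼 ε : ι → Bool, ((∑ i, pmo (ε i) • A i) ^ p).trace ≤
      Fintype.card V * g ^ p * 𝔼 ε : ι → Bool, (∑ i, pmo (ε i)) ^ p := by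
  have hword (w : Fin p → ι) :
      (List.ofFn fun t => A (w t)).prod.trace ≤ Fintype.card V * g ^ p := by
    simpa only [List.length_ofFn] using
      trace_list_prod_le hg (List.forall_mem_ofFn_iff.2 fun t => hA (w t))
  calc 𝔼 ε : ι → Bool, ((∑ i, pmo (ε i) • A i) ^ p).trace
      = ∑ w : Fin p → ι, (𝔼 ε : ι → Bool, ∏ t, pmo (ε (w t))) *
          (List.ofFn fun t => A (w t)).prod.trace := by
        simp only [sum_smul_pow, trace_sum, trace_smul, smul_eq_mul, expect_sum_comm, expect_mul]
    _ ≤ ∑ w : Fin p → ι, (𝔼 ε : ι → Bool, ∏ t, pmo (ε (w t))) * (Fintype.card V * g ^ p) :=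
        sum_le_sum fun w _ => mul_le_mul_of_nonneg_left (hword w) (expect_prod_pmo_nonneg w)
    _ = Fintype.card V * g ^ p * 𝔼 ε : ι → Bool, (∑ i, pmo (ε i)) ^ p := by
        rw [← sum_mul, mul_comm, ← expect_sum_comm]
        simp only [Fintype.sum_pow]

lemma dotProduct_mulVec_mulVec_of_isSymm {A : Matrix V V ℝ} (hA : A.IsSymm) (z : V → ℝ) :
    A *ᵥ z ⬝ᵥ A *ᵥ z = z ⬝ᵥ (A ^ 2) *ᵥ z := by
  rw [sq, ← mulVec_mulVec, dotProduct_mulVec z, ← mulVec_transpose, hA.eq]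

lemma dotProduct_sq_mulVec_le_trace {A : Matrix V V ℝ} (hA : A.IsSymm) (z : V → ℝ) :
    z ⬝ᵥ (A ^ 2) *ᵥ z ≤ (z ⬝ᵥ z) * (A ^ 2).trace := by
  have hdiag (v : V) : (A ^ 2) v v = A v ⬝ᵥ A v := by
    rw [sq, mul_apply']
    exact congrArg _ (funext fun w => hA.apply v w)
  rw [← dotProduct_mulVec_mulVec_of_isSymm hA, trace, mul_sum]
  refine sum_le_sum fun v _ => ?_
  rw [diag_apply, hdiag, ← sq, mul_comm (z ⬝ᵥ z)]
  exact dotProduct_sq_le (A v) z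

lemma dotProduct_mulVec_pow_two_pow_le {A : Matrix V V ℝ} (hA : A.IsSymm) (z : V → ℝ) (m : ℕ) :
    (z ⬝ᵥ A *ᵥ z) ^ 2 ^ m * (z ⬝ᵥ z) ≤ (z ⬝ᵥ z) ^ 2 ^ m * (z ⬝ᵥ (A ^ 2 ^ m) *ᵥ z) := by
  have hz : 0 ≤ z ⬝ᵥ z := dotProduct_self_nonneg z
  induction m generalizing A with
  | zero => simp [mul_comm]
  | succ m ih =>
    calc (z ⬝ᵥ A *ᵥ z) ^ 2 ^ (m + 1) * (z ⬝ᵥ z)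
        = ((z ⬝ᵥ A *ᵥ z) ^ 2) ^ 2 ^ m * (z ⬝ᵥ z) := by rw [pow_succ', pow_mul]
      _ ≤ ((z ⬝ᵥ z) * (z ⬝ᵥ (A ^ 2) *ᵥ z)) ^ 2 ^ m * (z ⬝ᵥ z) := by
          gcongr
          rw [← dotProduct_mulVec_mulVec_of_isSymm hA]
          exact dotProduct_sq_le z _
      _ = (z ⬝ᵥ z) ^ 2 ^ m * ((z ⬝ᵥ (A ^ 2) *ᵥ z) ^ 2 ^ m * (z ⬝ᵥ z)) := by ring
      _ ≤ (z ⬝ᵥ z) ^ 2 ^ m * ((z ⬝ᵥ z) ^ 2 ^ m * (z ⬝ᵥ ((A ^ 2) ^ 2 ^ m) *ᵥ z)) :=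
          mul_le_mul_of_nonneg_left (ih (hA.pow 2)) (pow_nonneg hz _)
      _ = (z ⬝ᵥ z) ^ 2 ^ (m + 1) * (z ⬝ᵥ (A ^ 2 ^ (m + 1)) *ᵥ z) := by
          rw [← mul_assoc, ← pow_add, ← two_mul, ← pow_succ', ← pow_mul, ← pow_succ']

lemma dotProduct_mulVec_pow_le_trace {A : Matrix V V ℝ} (hA : A.IsSymm) (z : V → ℝ) (m : ℕ) :
    (z ⬝ᵥ A *ᵥ z) ^ 2 ^ (m + 1) ≤ (z ⬝ᵥ z) ^ 2 ^ (m + 1) * (A ^ 2 ^ (m + 1)).trace := by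
  rcases (dotProduct_self_nonneg z).eq_or_lt with hz | hz
  · simp [dotProduct_self_eq_zero.1 hz.symm]
  refine le_of_mul_le_mul_right ((dotProduct_mulVec_pow_two_pow_le hA z _).trans ?_) hz
  rw [mul_assoc, pow_succ 2, pow_mul A, mul_comm (trace _)]
  gcongr
  exact dotProduct_sq_mulVec_le_trace (hA.pow _) z

omit [DecidableEq V] in
lemma expect_dotProduct_mulVec_le [Nonempty ι] {g : ℝ} (hg : 0 ≤ g) {A : ι → Matrix V V ℝ}
    (hsymm : ∀ i, (A i).IsSymm) (hA : ∀ i v, ∑ w, |A i v w| ≤ g) {z : (ι → Bool) → V → ℝ}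
    (hz : ∀ ε, z ε ⬝ᵥ z ε = Fintype.card V) {m : ℕ}
    (hm : Fintype.card V ≤ Real.exp 1 ^ 2 ^ (m + 1)) :
    𝔼 ε, z ε ⬝ᵥ (∑ i, pmo (ε i) • A i) *ᵥ z ε ≤
      Fintype.card V * (g * (Real.exp 1 * √(2 ^ (m + 1) * Fintype.card ι * Real.exp 1))) := by
  set N : ℝ := (Fintype.card V : ℝ)
  set P : ℕ := 2 ^ (m + 1) with hP
  have hP_even : Even P := by simp [hP, pow_succ]
  have hSymm (ε : ι → Bool) : (∑ i, pmo (ε i) • A i).IsSymm := by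
    rw [IsSymm, transpose_sum]
    exact sum_congr rfl fun i _ => (hsymm i).smul _
  have hmoment : 𝔼 ε : ι → Bool, (∑ i, pmo (ε i)) ^ P ≤
      √(2 ^ (m + 1) * Fintype.card ι * Real.exp 1) ^ P := by
    have h := expect_sum_pmo_pow_le (ι := ι) (2 ^ m) (by positivity)
    rw [← pow_succ'] at h
    rw [hP, pow_succ' 2 m, pow_mul √_, Real.sq_sqrt (by positivity), ← pow_succ']
    refine h.trans_eq ?_
    push_cast
    ring
  have hmoment_nonneg : 0 ≤ 𝔼 ε : ι → Bool, (∑ i, pmo (ε i)) ^ P :=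
    expect_nonneg fun ε _ => hP_even.pow_nonneg _
  refine le_of_pow_le_pow_left₀ (n := P) (by positivity) (by positivity) ?_
  calc (𝔼 ε, z ε ⬝ᵥ (∑ i, pmo (ε i) • A i) *ᵥ z ε) ^ P
      ≤ 𝔼 ε, (z ε ⬝ᵥ (∑ i, pmo (ε i) • A i) *ᵥ z ε) ^ P :=
        pow_expect_le_expect_pow_of_even _ hP_even
    _ ≤ 𝔼 ε, N ^ P * ((∑ i, pmo (ε i) • A i) ^ P).trace :=
        expect_le_expect fun ε _ => by
          simpa only [hz] using dotProduct_mulVec_pow_le_trace (hSymm ε) (z ε) m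
    _ ≤ N ^ P * (Real.exp 1 ^ P * g ^ P *
          √(2 ^ (m + 1) * Fintype.card ι * Real.exp 1) ^ P) := by
        rw [← mul_expect]
        gcongr
        exact (expect_trace_pow_le hg hA P).trans
          (mul_le_mul (by gcongr) hmoment hmoment_nonneg (by positivity))
    _ = (N * (g * (Real.exp 1 * √(2 ^ (m + 1) * Fintype.card ι * Real.exp 1)))) ^ P := by
        ring

end TraceMethod

section Kikuchi

open Matrix
open scoped Kronecker

/-- The total absolute value of the row `p` of `c`. -/
def rowWeight {P : Type*} [Fintype P] (c : Matrix P P ℝ) (p : P) : ℝ := ∑ q, |c p q|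

lemma rowWeight_nonneg {P : Type*} [Fintype P] (c : Matrix P P ℝ) (p : P) : 0 ≤ rowWeight c p :=
  sum_nonneg fun _ _ => abs_nonneg _

lemma rowWeight_sum_le {P α : Type*} [Fintype P] (s : Finset α) (c : α → Matrix P P ℝ) (p : P) :
    rowWeight (∑ a ∈ s, c a) p ≤ ∑ a ∈ s, rowWeight (c a) p := by
  simp only [rowWeight, Matrix.sum_apply]
  rw [sum_comm]
  exact sum_le_sum fun q _ => abs_sum_le_sum_abs _ _

lemma rowWeight_smul {P : Type*} [Fintype P] (r : ℝ) (c : Matrix P P ℝ) (p : P) :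
    rowWeight (r • c) p = |r| * rowWeight c p := by
  simp only [rowWeight, Matrix.smul_apply, smul_eq_mul, abs_mul, mul_sum]

lemma rowWeight_kronecker {P Q : Type*} [Fintype P] [Fintype Q] (A : Matrix P P ℝ)
    (B : Matrix Q Q ℝ) (p : P × Q) : rowWeight (A ⊗ₖ B) p = rowWeight A p.1 * rowWeight B p.2 := by
  simp only [rowWeight, kroneckerMap_apply, abs_mul, sum_mul_sum, Fintype.sum_prod_type]

variable {κ Y : Type*}

/-- The entries of a pair of tuples in the slots `s.1` of the first and `s.2` of the second. -/
def pairAt (s : κ × κ) (T : (κ → Y) × (κ → Y)) : Y × Y := (T.1 s.1, T.2 s.2)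

/-- The product of the signs that `x` gives to the two entries of a pair. -/
def pairSign (x : Y → Bool) (p : Y × Y) : ℝ := pmo (x p.1) * pmo (x p.2)

/-- The product of the signs that `x` gives to all entries of a pair of tuples. -/
def tupleSign [Fintype κ] (x : Y → Bool) (T : (κ → Y) × (κ → Y)) : ℝ :=
  ∏ a, pairSign x (T.1 a, T.2 a)

lemma tupleSign_sq [Fintype κ] (x : Y → Bool) (T : (κ → Y) × (κ → Y)) : tupleSign x T ^ 2 = 1 := by
  simp only [tupleSign, pairSign, ← prod_pow, mul_pow, pmo_sq, mul_one, prod_const_one]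

section Pruning

variable [Fintype κ] [Fintype Y]

/-- The total weight under `c` of the moves that rewrite one entry of each of the two tuples. -/
def moveDegree (c : Matrix (Y × Y) (Y × Y) ℝ) (T : (κ → Y) × (κ → Y)) : ℝ :=
  ∑ s, rowWeight c (pairAt s T)

/-- The indicator of the pairs of tuples whose move degree is at most `τ`. -/
def keep (c : Matrix (Y × Y) (Y × Y) ℝ) (τ : ℝ) (T : (κ → Y) × (κ → Y)) : ℝ :=
  if moveDegree c T ≤ τ then 1 else 0

lemma keep_nonneg (c : Matrix (Y × Y) (Y × Y) ℝ) (τ : ℝ) (T : (κ → Y) × (κ → Y)) :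
    0 ≤ keep c τ T := by
  unfold keep
  positivity

lemma keep_le_one (c : Matrix (Y × Y) (Y × Y) ℝ) (τ : ℝ) (T : (κ → Y) × (κ → Y)) :
    keep c τ T ≤ 1 := by
  unfold keep
  split_ifs <;> norm_num

lemma keep_mul_moveDegree_le (c : Matrix (Y × Y) (Y × Y) ℝ) {τ : ℝ} (hτ : 0 ≤ τ)
    (T : (κ → Y) × (κ → Y)) : keep c τ T * moveDegree c T ≤ τ := by
  unfold keep
  split_ifs with h <;> simpa

lemma one_sub_keep_le (c : Matrix (Y × Y) (Y × Y) ℝ) {τ : ℝ} (hτ : 0 < τ)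
    (T : (κ → Y) × (κ → Y)) : 1 - keep c τ T ≤ moveDegree c T / τ := by
  have hT : 0 ≤ moveDegree c T := sum_nonneg fun _ _ => rowWeight_nonneg c _
  unfold keep
  split_ifs with h
  · simpa using div_nonneg hT hτ.le
  · simpa using (one_le_div hτ).2 (not_le.1 h).le

end Pruning

variable [DecidableEq κ]

/-- The pair of tuples obtained by writing `p` into the slots `s.1` of the first and `s.2` of the
second tuple. -/
def updatePair (s : κ × κ) (T : (κ → Y) × (κ → Y)) (p : Y × Y) : (κ → Y) × (κ → Y) :=
  (Function.update T.1 s.1 p.1, Function.update T.2 s.2 p.2)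

lemma pairAt_updatePair (s : κ × κ) (T : (κ → Y) × (κ → Y)) (p : Y × Y) :
    pairAt s (updatePair s T p) = p := by
  simp [pairAt, updatePair]

lemma updatePair_pairAt (s : κ × κ) (T : (κ → Y) × (κ → Y)) : updatePair s T (pairAt s T) = T := by
  simp [pairAt, updatePair]

lemma updatePair_updatePair (s : κ × κ) (T : (κ → Y) × (κ → Y)) (p q : Y × Y) :
    updatePair s (updatePair s T p) q = updatePair s T q := by
  simp [updatePair]

lemma eq_updatePair_pairAt_comm {s : κ × κ} {T T' : (κ → Y) × (κ → Y)} :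
    T' = updatePair s T (pairAt s T') ↔ T = updatePair s T' (pairAt s T) := by
  constructor <;> intro h <;> rw [h, updatePair_updatePair, updatePair_pairAt]

lemma prod_pmo_update_mul [Fintype κ] (x : Y → Bool) (T : κ → Y) (a : κ) (y y' : Y) :
    (∏ b, pmo (x (Function.update T a y b))) * ∏ b, pmo (x (Function.update T a y' b)) =
      pmo (x y) * pmo (x y') := by
  rw [← prod_mul_distrib, prod_eq_single a, Function.update_self, Function.update_self]
  · intro b _ hb
    rw [Function.update_of_ne hb, Function.update_of_ne hb, ← sq, pmo_sq]
  · simp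

lemma tupleSign_updatePair_mul [Fintype κ] (x : Y → Bool) (s : κ × κ) (T : (κ → Y) × (κ → Y))
    (p q : Y × Y) :
    tupleSign x (updatePair s T p) * tupleSign x (updatePair s T q) =
      pairSign x p * pairSign x q := by
  simp only [tupleSign, pairSign, updatePair, prod_mul_distrib]
  rw [mul_mul_mul_comm, prod_pmo_update_mul, prod_pmo_update_mul, mul_mul_mul_comm]

variable [Fintype κ] [Fintype Y]

lemma sum_ite_eq_updatePair [DecidableEq Y] (s : κ × κ) (T : (κ → Y) × (κ → Y))
    (G : (κ → Y) × (κ → Y) → ℝ) :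
    ∑ T', (if T' = updatePair s T (pairAt s T') then G T' else 0) =
      ∑ p, G (updatePair s T p) := by
  rw [← sum_filter]
  exact sum_nbij' (pairAt s) (updatePair s T) (fun _ _ => mem_univ _)
    (fun p _ => by simp [pairAt_updatePair]) (fun _ hT' => (mem_filter.1 hT').2.symm)
    (fun p _ => pairAt_updatePair s T p) (fun _ hT' => congrArg G (mem_filter.1 hT').2)

lemma expect_updatePair [Nonempty Y] (s : κ × κ) (G : (κ → Y) × (κ → Y) → ℝ) :
    𝔼 p, 𝔼 T, G (updatePair s T p) = 𝔼 T, G T := by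
  rw [expect_comm]
  exact expect_expect_fst_of_involutive
    (σ := fun P : ((κ → Y) × (κ → Y)) × (Y × Y) => (updatePair s P.1 P.2, pairAt s P.1))
    (fun P => by simp only [updatePair_updatePair, updatePair_pairAt, pairAt_updatePair]) G

/-- An upper bound for the average of `moveDegree c` over the pairs of `ℓ`-tuples that carry the
entries `p` in two given slots. -/
def plantedDegree (ℓ : ℕ) (c : Matrix (Y × Y) (Y × Y) ℝ) (p : Y × Y) : ℝ :=
  rowWeight c p + ℓ * 𝔼 y, rowWeight c (p.1, y) + ℓ * 𝔼 y, rowWeight c (y, p.2)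
    + ℓ ^ 2 * 𝔼 y, 𝔼 y', rowWeight c (y, y')

lemma expect_pairAt_updatePair_le [Nonempty Y] (s s' : κ × κ) (p : Y × Y) {h : Y × Y → ℝ}
    (hh : ∀ p, 0 ≤ h p) :
    𝔼 T : (κ → Y) × (κ → Y), h (pairAt s' (updatePair s T p)) ≤
      (if s' = s then h p else 0) + (if s'.1 = s.1 then 𝔼 y, h (p.1, y) else 0)
        + (if s'.2 = s.2 then 𝔼 y, h (y, p.2) else 0) + 𝔼 y, 𝔼 y', h (y, y') := by
  obtain ⟨a, b⟩ := s
  obtain ⟨a', b'⟩ := s'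
  have h₁ : 0 ≤ 𝔼 y, h (p.1, y) := expect_nonneg fun _ _ => hh _
  have h₂ : 0 ≤ 𝔼 y, h (y, p.2) := expect_nonneg fun _ _ => hh _
  have h₁₂ : 0 ≤ 𝔼 y, 𝔼 y', h (y, y') := expect_nonneg fun _ _ => expect_nonneg fun _ _ => hh _
  rw [← univ_product_univ, expect_product]
  by_cases ha : a' = a <;> by_cases hb : b' = b <;>
    simp only [pairAt, updatePair, ha, hb, Prod.mk.injEq, and_true, and_false, if_true,
      if_false, Function.update_self, ne_eq, not_false_eq_true, Function.update_of_ne,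
      Fintype.expect_const]
  · linarith
  · rw [expect_apply b' fun y => h (p.1, y)]
    linarith
  · rw [expect_apply a' fun y => h (y, p.2)]
    linarith
  · rw [expect_apply a' fun y => 𝔼 T : κ → Y, h (y, T b')]
    rw [expect_congr rfl fun y _ => expect_apply b' fun y' => h (y, y')]
    simp only [zero_add, le_refl]

lemma expect_moveDegree_updatePair_le [Nonempty Y] (c : Matrix (Y × Y) (Y × Y) ℝ) (s : κ × κ)
    (p : Y × Y) :
    𝔼 T, moveDegree c (updatePair s T p) ≤ plantedDegree (Fintype.card κ) c p := by
  unfold moveDegree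
  rw [expect_sum_comm]
  refine (sum_le_sum fun s' _ =>
    expect_pairAt_updatePair_le s s' p (rowWeight_nonneg c)).trans_eq ?_
  have hfst (r : ℝ) : ∑ s' : κ × κ, (if s'.1 = s.1 then r else 0) = Fintype.card κ * r := by
    simp [Fintype.sum_prod_type_right]
  have hsnd (r : ℝ) : ∑ s' : κ × κ, (if s'.2 = s.2 then r else 0) = Fintype.card κ * r := by
    simp [Fintype.sum_prod_type]
  simp only [sum_add_distrib, sum_ite_eq', mem_univ, if_true, hfst, hsnd, sum_const, card_univ,
    Fintype.card_prod, nsmul_eq_mul, Nat.cast_mul, plantedDegree, sq]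

/-- The probability that a random pair of tuples is kept both when `p` and when `q` is written into
the slots `s`. -/
def keepProb (c : Matrix (Y × Y) (Y × Y) ℝ) (τ : ℝ) (s : κ × κ) (p q : Y × Y) : ℝ :=
  𝔼 T, keep c τ (updatePair s T p) * keep c τ (updatePair s T q)

lemma keepProb_comm (c : Matrix (Y × Y) (Y × Y) ℝ) (τ : ℝ) (s : κ × κ) (p q : Y × Y) :
    keepProb c τ s p q = keepProb c τ s q p := by
  simp only [keepProb, mul_comm]

lemma half_le_keepProb [Nonempty Y] {c : Matrix (Y × Y) (Y × Y) ℝ} {γ : ℝ} (hγ : 0 < γ)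
    (hc : ∀ p, plantedDegree (Fintype.card κ) c p ≤ γ) (s : κ × κ) (p q : Y × Y) :
    1 / 2 ≤ keepProb c (4 * γ) s p q := by
  have hmarkov (p : Y × Y) : 𝔼 T, (1 - keep c (4 * γ) (updatePair s T p)) ≤ 1 / 4 :=
    calc 𝔼 T, (1 - keep c (4 * γ) (updatePair s T p))
        ≤ 𝔼 T, moveDegree c (updatePair s T p) / (4 * γ) :=
          expect_le_expect fun T _ => one_sub_keep_le c (by positivity) _
      _ ≤ γ / (4 * γ) := by
          rw [← expect_div]
          gcongr
          exact (expect_moveDegree_updatePair_le c s p).trans (hc p)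
      _ = 1 / 4 := by field_simp
  have hunion : 1 - 𝔼 T, (1 - keep c (4 * γ) (updatePair s T p))
      - 𝔼 T, (1 - keep c (4 * γ) (updatePair s T q)) ≤ keepProb c (4 * γ) s p q :=
    calc _ = 𝔼 T, (1 - (1 - keep c (4 * γ) (updatePair s T p))
            - (1 - keep c (4 * γ) (updatePair s T q))) := by
          simp only [expect_sub_distrib, Fintype.expect_const]
      _ ≤ keepProb c (4 * γ) s p q := expect_le_expect fun T _ => by
          nlinarith [mul_nonneg (sub_nonneg.2 (keep_le_one c (4 * γ) (updatePair s T p)))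
            (sub_nonneg.2 (keep_le_one c (4 * γ) (updatePair s T q)))]
  linarith [hmarkov p, hmarkov q]

lemma expect_sum_move [Nonempty Y] {c : Matrix (Y × Y) (Y × Y) ℝ} {τ : ℝ} {s : κ × κ}
    (hprob : ∀ p q, keepProb c τ s p q ≠ 0) {z : (κ → Y) × (κ → Y) → ℝ}
    {χ : Y × Y → ℝ} (hz : ∀ T p q, z (updatePair s T p) * z (updatePair s T q) = χ p * χ q) :
    𝔼 T, ∑ q, z T * z (updatePair s T q) * (keep c τ T * keep c τ (updatePair s T q) *
      (c (pairAt s T) q / keepProb c τ s (pairAt s T) q)) =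
    (χ ⬝ᵥ c *ᵥ χ) / Fintype.card Y ^ 2 := by
  rw [← expect_updatePair s]
  calc 𝔼 p, 𝔼 T, ∑ q, z (updatePair s T p) * z (updatePair s (updatePair s T p) q) *
        (keep c τ (updatePair s T p) * keep c τ (updatePair s (updatePair s T p) q) *
          (c (pairAt s (updatePair s T p)) q / keepProb c τ s (pairAt s (updatePair s T p)) q))
      = 𝔼 p, ∑ q, χ p * χ q * (keepProb c τ s p q * (c p q / keepProb c τ s p q)) := by
        simp only [updatePair_updatePair, pairAt_updatePair, expect_sum_comm, hz, ← mul_expect,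
          ← expect_mul, keepProb]
    _ = 𝔼 p, ∑ q, χ p * (c p q * χ q) := by
        refine expect_congr rfl fun p _ => sum_congr rfl fun q _ => ?_
        rw [mul_div_cancel₀ _ (hprob p q)]
        ring
    _ = (χ ⬝ᵥ c *ᵥ χ) / Fintype.card Y ^ 2 := by
        simp only [Fintype.expect_eq_sum_div_card, Fintype.card_prod, Nat.cast_mul, sq,
          dotProduct, mulVec, mul_sum]

variable [DecidableEq Y]

/-- The pruned Kikuchi matrix of `c`: rewriting `p` to `q` in one slot of each of the two tuples has
weight `c p q`, normalised by the probability that neither end of the move is pruned. -/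
def kikuchiMatrix (c : Matrix (Y × Y) (Y × Y) ℝ) (τ : ℝ) :
    Matrix ((κ → Y) × (κ → Y)) ((κ → Y) × (κ → Y)) ℝ :=
  .of fun T T' => ∑ s, if T' = updatePair s T (pairAt s T') then
    keep c τ T * keep c τ T' *
      (c (pairAt s T) (pairAt s T') / keepProb c τ s (pairAt s T) (pairAt s T')) else 0

lemma kikuchiMatrix_isSymm {c : Matrix (Y × Y) (Y × Y) ℝ} (hc : c.IsSymm) (τ : ℝ) :
    (kikuchiMatrix (κ := κ) c τ).IsSymm := by
  refine .ext fun T T' => sum_congr rfl fun s _ => ?_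
  exact if_congr eq_updatePair_pairAt_comm
    (by rw [hc.apply, keepProb_comm, mul_comm (keep c τ T')]) rfl

lemma sum_abs_kikuchiMatrix_apply_le [Nonempty Y] {c : Matrix (Y × Y) (Y × Y) ℝ} {γ : ℝ}
    (hγ : 0 < γ) (hc : ∀ p, plantedDegree (Fintype.card κ) c p ≤ γ) (T : (κ → Y) × (κ → Y)) :
    ∑ T', |kikuchiMatrix c (4 * γ) T T'| ≤ 8 * γ := by
  set K : (κ → Y) × (κ → Y) → ℝ := keep c (4 * γ)
  have hmove (s : κ × κ) (T' : (κ → Y) × (κ → Y)) :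
      |K T * K T' * (c (pairAt s T) (pairAt s T') /
        keepProb c (4 * γ) s (pairAt s T) (pairAt s T'))| ≤
        2 * K T * |c (pairAt s T) (pairAt s T')| := by
    have hprob := half_le_keepProb hγ hc s (pairAt s T) (pairAt s T')
    have hT := keep_nonneg c (4 * γ) T
    rw [abs_mul, abs_mul, abs_div, abs_of_nonneg hT, abs_of_nonneg (keep_nonneg _ _ T'),
      abs_of_nonneg (le_trans (by norm_num) hprob)]
    calc K T * K T' * (|c (pairAt s T) (pairAt s T')| /
          keepProb c (4 * γ) s (pairAt s T) (pairAt s T'))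
        ≤ K T * 1 * (|c (pairAt s T) (pairAt s T')| / (1 / 2)) := by
          gcongr
          exact keep_le_one _ _ _
      _ = 2 * K T * |c (pairAt s T) (pairAt s T')| := by ring
  calc ∑ T', |kikuchiMatrix c (4 * γ) T T'|
      ≤ ∑ T', ∑ s, if T' = updatePair s T (pairAt s T') then
          2 * K T * |c (pairAt s T) (pairAt s T')| else 0 := by
        refine sum_le_sum fun T' _ => (abs_sum_le_sum_abs _ _).trans (sum_le_sum fun s _ => ?_)
        rw [apply_ite abs, abs_zero]
        split_ifs
        exacts [hmove s T', le_rfl]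
    _ = 2 * (K T * moveDegree c T) := by
        rw [sum_comm]
        simp only [sum_ite_eq_updatePair, pairAt_updatePair, ← mul_sum, moveDegree, rowWeight,
          mul_assoc]
    _ ≤ 8 * γ := by linarith [keep_mul_moveDegree_le c (show 0 ≤ 4 * γ by positivity) T]

lemma dotProduct_kikuchiMatrix_mulVec_eq_sum (c : Matrix (Y × Y) (Y × Y) ℝ) (τ : ℝ)
    (z : (κ → Y) × (κ → Y) → ℝ) :
    z ⬝ᵥ kikuchiMatrix c τ *ᵥ z = ∑ s, ∑ T, ∑ q, z T * z (updatePair s T q) *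
      (keep c τ T * keep c τ (updatePair s T q) *
        (c (pairAt s T) q / keepProb c τ s (pairAt s T) q)) := by
  have hentry (T T' : (κ → Y) × (κ → Y)) : z T * (kikuchiMatrix c τ T T' * z T') =
      ∑ s, if T' = updatePair s T (pairAt s T') then z T * z T' * (keep c τ T * keep c τ T' *
        (c (pairAt s T) (pairAt s T') / keepProb c τ s (pairAt s T) (pairAt s T'))) else 0 := by
    rw [mul_left_comm, mul_comm, kikuchiMatrix, of_apply, mul_sum]
    simp only [mul_ite, mul_zero]
  simp only [dotProduct, mulVec, mul_sum, hentry]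
  simp only [sum_comm (f := fun T' s => ite (T' = updatePair s _ (pairAt s T')) _ _)]
  rw [sum_comm]
  simp only [sum_ite_eq_updatePair, pairAt_updatePair]

lemma dotProduct_kikuchiMatrix_mulVec [Nonempty Y] {c : Matrix (Y × Y) (Y × Y) ℝ} {τ : ℝ}
    (hprob : ∀ (s : κ × κ) p q, keepProb c τ s p q ≠ 0) {z : (κ → Y) × (κ → Y) → ℝ}
    {χ : Y × Y → ℝ} (hz : ∀ s T p q, z (updatePair s T p) * z (updatePair s T q) = χ p * χ q) :
    z ⬝ᵥ kikuchiMatrix c τ *ᵥ z =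
      Fintype.card ((κ → Y) × (κ → Y)) * (Fintype.card κ ^ 2 / Fintype.card Y ^ 2) *
        (χ ⬝ᵥ c *ᵥ χ) := by
  rw [dotProduct_kikuchiMatrix_mulVec_eq_sum]
  simp only [← Fintype.card_mul_expect (ι := (κ → Y) × (κ → Y)), expect_sum_move (hprob _) (hz _)]
  rw [sum_const, card_univ, Fintype.card_prod κ, nsmul_eq_mul]
  push_cast
  ring

omit [DecidableEq κ] [DecidableEq Y] in
lemma expect_sum_pmo_mul_pairSign_le {ι : Type*} [Fintype ι] [DecidableEq ι] [Nonempty ι]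
    [Nonempty κ] [Nonempty Y] {γ : ℝ} (hγ : 0 < γ) {c : ι → Matrix (Y × Y) (Y × Y) ℝ}
    (hsymm : ∀ i, (c i).IsSymm) (hc : ∀ i p, plantedDegree (Fintype.card κ) (c i) p ≤ γ)
    (x : (ι → Bool) → Y → Bool) {m : ℕ}
    (hm : (Fintype.card Y : ℝ) ^ (2 * Fintype.card κ) ≤ Real.exp 1 ^ 2 ^ (m + 1)) :
    𝔼 ε, ∑ i, pmo (ε i) * (pairSign (x ε) ⬝ᵥ c i *ᵥ pairSign (x ε)) ≤
      Fintype.card Y ^ 2 / Fintype.card κ ^ 2 *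
        (8 * γ * (Real.exp 1 * √(2 ^ (m + 1) * Fintype.card ι * Real.exp 1))) := by
  set N : ℝ := (Fintype.card ((κ → Y) × (κ → Y)) : ℝ) with hN
  set A : ι → Matrix ((κ → Y) × (κ → Y)) ((κ → Y) × (κ → Y)) ℝ :=
    fun i => kikuchiMatrix (c i) (4 * γ)
  have hcard : N = Fintype.card Y ^ (2 * Fintype.card κ) := by
    rw [hN, Fintype.card_prod, Fintype.card_fun, ← sq, ← pow_mul, mul_comm 2, Nat.cast_pow]
  have hprob (i : ι) (s : κ × κ) (p q : Y × Y) : keepProb (c i) (4 * γ) s p q ≠ 0 :=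
    (lt_of_lt_of_le (by norm_num) (half_le_keepProb hγ (hc i) s p q)).ne'
  have hform (ε : ι → Bool) :
      tupleSign (x ε) ⬝ᵥ (∑ i, pmo (ε i) • A i) *ᵥ tupleSign (x ε) =
        N * (Fintype.card κ ^ 2 / Fintype.card Y ^ 2) *
          ∑ i, pmo (ε i) * (pairSign (x ε) ⬝ᵥ c i *ᵥ pairSign (x ε)) := by
    simp only [sum_mulVec, dotProduct_sum, smul_mulVec, dotProduct_smul, smul_eq_mul, mul_sum]
    refine sum_congr rfl fun i _ => ?_
    rw [dotProduct_kikuchiMatrix_mulVec (hprob i) (tupleSign_updatePair_mul (x ε))]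
    ring
  have hnorm (ε : ι → Bool) :
      tupleSign (κ := κ) (x ε) ⬝ᵥ tupleSign (x ε) = Fintype.card ((κ → Y) × (κ → Y)) := by
    simp only [dotProduct, ← sq, tupleSign_sq, sum_const, card_univ, nsmul_eq_mul, mul_one]
  have htrace := expect_dotProduct_mulVec_le (A := A) (by positivity : 0 ≤ 8 * γ)
    (fun i => kikuchiMatrix_isSymm (hsymm i) _)
    (fun i => sum_abs_kikuchiMatrix_apply_le hγ (hc i)) hnorm (hcard.trans_le hm)
  have hYκ : (0 : ℝ) < Fintype.card κ ^ 2 / Fintype.card Y ^ 2 := by positivity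
  have hN0 : 0 < N := by positivity
  simp only [hform, ← mul_expect] at htrace
  rw [← hN, mul_assoc, mul_le_mul_iff_right₀ hN0, ← le_div_iff₀' hYκ] at htrace
  refine htrace.trans_eq ?_
  rw [div_eq_mul_inv, inv_div, mul_comm]

end Kikuchi

section Decoupling

variable {ι X : Type*} [Fintype ι] [DecidableEq ι]

lemma expect_ite_separated {i j : ι} (hij : i ≠ j) :
    𝔼 S : ι → Bool, (if S i ∧ ¬ S j then (1 : ℝ) else 0) = 1 / 4 := by
  rw [expect_apply_apply hij fun y y' : Bool => if y ∧ ¬ y' then (1 : ℝ) else 0, expect_bool,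
    expect_bool, expect_bool]
  norm_num

lemma expect_separated_chaos_le {F : ι → ι → X → ℝ} {B : ℝ}
    (hB : ∀ β : ι → ι → ℝ, (∀ i j, |β i j| ≤ 1) → ∀ x : (ι → Bool) → X,
      𝔼 ε, ∑ i, pmo (ε i) * ∑ j, β i j * F i j (x ε) ≤ B)
    (x : (ι → Bool) → X) (S : ι → Bool) :
    𝔼 b, ∑ i, ∑ j, (if S i ∧ ¬ S j then 1 else 0) * (pmo (b i) * pmo (b j) * F i j (x b)) ≤ B := by
  rw [← expect_piecewise {i | S i}]
  refine expect_le univ_nonempty fun b _ => ?_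
  set mix : (ι → Bool) → ι → Bool := fun ε => Finset.piecewise {i | S i} ε b
  have hβ (i j : ι) : |(if S i ∧ ¬ S j then 1 else 0) * pmo (b j)| ≤ 1 := by
    rw [abs_mul, abs_pmo]
    split_ifs <;> norm_num
  refine (expect_congr rfl fun ε _ => ?_).trans_le
    (hB (fun i j => (if S i ∧ ¬ S j then 1 else 0) * pmo (b j)) hβ fun ε => x (mix ε))
  simp only [mul_sum]
  refine sum_congr rfl fun i _ => sum_congr rfl fun j _ => ?_
  split_ifs with hij
  · have hi : mix ε i = ε i := piecewise_eq_of_mem _ _ _ (by simp [hij.1])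
    have hj : mix ε j = b j := piecewise_eq_of_notMem _ _ _ (by simp [hij.2])
    change 1 * (pmo (mix ε i) * pmo (mix ε j) * F i j (x (mix ε))) = _
    rw [hi, hj]
    ring
  · ring

lemma expect_offDiag_chaos_le {F : ι → ι → X → ℝ} {B : ℝ}
    (hB : ∀ β : ι → ι → ℝ, (∀ i j, |β i j| ≤ 1) → ∀ x : (ι → Bool) → X,
      𝔼 ε, ∑ i, pmo (ε i) * ∑ j, β i j * F i j (x ε) ≤ B) (x : (ι → Bool) → X) :
    𝔼 b, ∑ i, ∑ j ∈ univ.erase i, pmo (b i) * pmo (b j) * F i j (x b) ≤ 4 * B := by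
  have hsep (i j : ι) : 4 * 𝔼 S : ι → Bool, (if S i ∧ ¬ S j then (1 : ℝ) else 0) =
      if j ∈ univ.erase i then 1 else 0 := by
    by_cases hij : i = j
    · simp [hij]
    · rw [expect_ite_separated hij]
      simp [Ne.symm hij]
  calc 𝔼 b, ∑ i, ∑ j ∈ univ.erase i, pmo (b i) * pmo (b j) * F i j (x b)
      = 4 * 𝔼 S : ι → Bool, 𝔼 b, ∑ i, ∑ j,
          (if S i ∧ ¬ S j then 1 else 0) * (pmo (b i) * pmo (b j) * F i j (x b)) := by
        rw [expect_comm, mul_expect]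
        refine expect_congr rfl fun b _ => ?_
        simp only [expect_sum_comm, ← expect_mul, mul_sum]
        refine sum_congr rfl fun i _ => ?_
        simp only [← mul_assoc, hsep, ite_mul, one_mul, zero_mul, sum_ite_mem, univ_inter]
    _ ≤ 4 * B := by
        gcongr
        exact expect_le univ_nonempty fun S _ => expect_separated_chaos_le hB x S

end Decoupling

section AverageDegree

variable {V : Type*} [Fintype V] {a e : V → V → ℝ} {A η : ℝ}

lemma expect_sum_mul_right_le (ha₀ : ∀ u v, 0 ≤ a u v) (hacol : ∀ v, ∑ u, a u v ≤ A)
    (he : ∀ u, 𝔼 v, e u v ≤ η) (hη : 0 ≤ η) (v : V) : 𝔼 v', ∑ u, a u v * e u v' ≤ A * η :=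
  calc 𝔼 v', ∑ u, a u v * e u v' = ∑ u, a u v * 𝔼 v', e u v' := by
        simp only [expect_sum_comm, mul_expect]
    _ ≤ ∑ u, a u v * η := sum_le_sum fun u _ => mul_le_mul_of_nonneg_left (he u) (ha₀ u v)
    _ ≤ A * η := by
        rw [← sum_mul]
        exact mul_le_mul_of_nonneg_right (hacol v) hη

lemma expect_sum_mul_left_le (harow : ∀ u, ∑ v, a u v ≤ A) (he₀ : ∀ u v, 0 ≤ e u v)
    (he : ∀ v, 𝔼 u, e u v ≤ η) (hA : 0 ≤ A) (v' : V) : 𝔼 v, ∑ u, a u v * e u v' ≤ A * η :=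
  calc 𝔼 v, ∑ u, a u v * e u v' = 𝔼 u, (∑ v, a u v) * e u v' := by
        simp only [Fintype.expect_eq_sum_div_card, sum_mul]
        rw [sum_comm]
    _ ≤ 𝔼 u, A * e u v' :=
        expect_le_expect fun u _ => mul_le_mul_of_nonneg_right (harow u) (he₀ u v')
    _ ≤ A * η := by
        rw [← mul_expect]
        exact mul_le_mul_of_nonneg_left (he v') hA

lemma plantedDegree_le [Nonempty V] {c : Matrix (V × V) (V × V) ℝ} {B : ℝ}
    (ha₀ : ∀ u v, 0 ≤ a u v) (harow : ∀ u, ∑ v, a u v ≤ A) (hacol : ∀ v, ∑ u, a u v ≤ A)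
    (he₀ : ∀ u v, 0 ≤ e u v) (heB : ∀ u v, e u v ≤ B)
    (herow : ∀ u, 𝔼 v, e u v ≤ η) (hecol : ∀ v, 𝔼 u, e u v ≤ η)
    (hc : ∀ p, rowWeight c p ≤ ∑ u, a u p.1 * e u p.2) {ℓ : ℕ} (hℓ : 1 ≤ ℓ) (p : V × V) :
    plantedDegree ℓ c p ≤ A * (B + 3 * ℓ ^ 2 * η) := by
  obtain ⟨v⟩ := ‹Nonempty V›
  have hA : 0 ≤ A := (sum_nonneg fun u _ => ha₀ u v).trans (hacol v)
  have hη : 0 ≤ η := (expect_nonneg fun u _ => he₀ u v).trans (hecol v)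
  have hpoint : rowWeight c p ≤ A * B :=
    calc rowWeight c p ≤ ∑ u, a u p.1 * e u p.2 := hc p
      _ ≤ ∑ u, a u p.1 * B := sum_le_sum fun u _ => mul_le_mul_of_nonneg_left (heB _ _) (ha₀ _ _)
      _ ≤ A * B := by
          rw [← sum_mul]
          exact mul_le_mul_of_nonneg_right (hacol _) ((he₀ v v).trans (heB v v))
  have hsnd (v : V) : 𝔼 v', rowWeight c (v, v') ≤ A * η :=
    (expect_le_expect fun v' _ => hc (v, v')).trans (expect_sum_mul_right_le ha₀ hacol herow hη v)
  have hfst (v' : V) : 𝔼 v, rowWeight c (v, v') ≤ A * η :=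
    (expect_le_expect fun v _ => hc (v, v')).trans (expect_sum_mul_left_le harow he₀ hecol hA v')
  have hboth : 𝔼 v, 𝔼 v', rowWeight c (v, v') ≤ A * η := expect_le ⟨v, mem_univ v⟩ fun v _ => hsnd v
  have hℓsq : (ℓ : ℝ) * (A * η) ≤ ℓ ^ 2 * (A * η) := by
    gcongr
    exact le_self_pow₀ (by exact_mod_cast hℓ) two_ne_zero
  calc plantedDegree ℓ c p ≤ A * B + ℓ * (A * η) + ℓ * (A * η) + ℓ ^ 2 * (A * η) := by
        unfold plantedDegree
        gcongr
        exacts [hsnd _, hfst _]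
    _ ≤ A * (B + 3 * ℓ ^ 2 * η) := by linarith

end AverageDegree

section Parameters

lemma exists_tuple_length {n k d : ℕ} (hk : 0 < k) (hd : 0 < d) :
    ∃ ℓ : ℕ, 1 ≤ ℓ ∧ ℓ ^ 2 * min (2 * k) (d * n) ≤ 2 * d * n ∧ n ≤ 4 * ℓ ^ 2 * k := by
  set q := (n / k).sqrt
  have hlow : q ^ 2 * k ≤ n :=
    (Nat.mul_le_mul_right k (Nat.sqrt_le' (n / k))).trans (Nat.div_mul_le_self n k)
  have hup : n < (q + 1) ^ 2 * k := (Nat.div_lt_iff_lt_mul hk).1 (Nat.lt_succ_sqrt' (n / k))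
  rcases q.eq_zero_or_pos with hq | hq
  · refine ⟨1, le_rfl, ?_, ?_⟩
    · linarith [min_le_right (2 * k) (d * n), Nat.zero_le (d * n)]
    · rw [hq] at hup
      linarith
  · refine ⟨q, hq, ?_, ?_⟩
    · calc q ^ 2 * min (2 * k) (d * n) ≤ q ^ 2 * (2 * k) := by gcongr; exact min_le_left _ _
        _ ≤ 2 * n := by linarith
        _ ≤ 2 * d * n := by gcongr; omega
    · calc n ≤ (2 * q) ^ 2 * k := hup.le.trans (by gcongr; omega)
        _ = 4 * q ^ 2 * k := by ring

lemma exists_moment {n ℓ : ℕ} (hn : 2 ≤ n) (hℓ : 1 ≤ ℓ) :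
    ∃ m : ℕ, (n : ℝ) ^ (2 * ℓ) ≤ Real.exp 1 ^ 2 ^ (m + 1) ∧
      (2 : ℝ) ^ (m + 1) ≤ 4 * (ℓ * Real.log n) := by
  have hlog : 1 / 2 ≤ Real.log n :=
    (by linarith [Real.log_two_gt_d9] : 1 / 2 ≤ Real.log 2).trans
      (Real.log_le_log two_pos (by exact_mod_cast hn))
  have hℓlog : 1 / 2 ≤ ℓ * Real.log n :=
    hlog.trans (le_mul_of_one_le_left (by linarith) (by exact_mod_cast hℓ))
  obtain ⟨m, hlow, hup⟩ := exists_nat_pow_near (y := 2)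
    (show 1 ≤ 2 * (ℓ * Real.log n) by linarith) one_lt_two
  refine ⟨m, ?_, by rw [pow_succ]; linarith⟩
  rw [← Real.log_le_log_iff (by positivity) (by positivity), Real.log_pow, Real.log_pow,
    Real.log_exp]
  push_cast
  linarith

end Parameters

section Links

open Matrix

variable {V : Type*} [DecidableEq V]

/-- The adjacency matrix of the link of `u`: the entry at `v`, `w` is the number of hyperedges of
`H` in which `u`, `v`, `w` are three distinct vertices. -/
def linkMatrix (H : Finset (Finset V)) (u : V) : Matrix V V ℝ :=
  .of fun v w => #{C ∈ H | u ∈ C ∧ v ∈ C.erase u ∧ w ∈ (C.erase u).erase v}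

/-- The number of hyperedges of `H` through the pair `{u, v}`, set to `0` when `u = v`. -/
def codegree (H : Finset (Finset V)) (u v : V) : ℝ := if u = v then 0 else #{C ∈ H | {u, v} ⊆ C}

variable {H : Finset (Finset V)}

lemma linkMatrix_nonneg (u v w : V) : 0 ≤ linkMatrix H u v w := Nat.cast_nonneg _

lemma linkMatrix_isSymm (u : V) : (linkMatrix H u).IsSymm := by
  refine .ext fun v w => ?_
  simp only [linkMatrix, of_apply, mem_erase]
  congr! 4
  tauto

lemma codegree_nonneg (u v : V) : 0 ≤ codegree H u v := by
  unfold codegree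
  positivity

lemma codegree_comm (u v : V) : codegree H u v = codegree H v u := by
  simp only [codegree, eq_comm, pair_comm]

lemma codegree_eq_card_filter_erase (u v : V) :
    codegree H u v = #{C ∈ H | u ∈ C ∧ v ∈ C.erase u} := by
  by_cases huv : u = v
  · simp [codegree, huv]
  · simp [codegree, huv, insert_subset_iff, Ne.symm huv]

lemma card_filter_mem_le_one (hH : (H : Set (Finset V)).Pairwise Disjoint) (u : V) :
    #{C ∈ H | u ∈ C} ≤ 1 := by
  refine card_le_one.2 fun C hC D hD => ?_
  rw [mem_filter] at hC hD
  exact hH.eq hC.1 hD.1 (not_disjoint_iff.2 ⟨u, hC.2, hD.2⟩)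

lemma sum_mul_prod_erase (C : Finset V) (y : V → ℝ) :
    ∑ u ∈ C, y u * ∏ v ∈ C.erase u, y v = #C * ∏ v ∈ C, y v := by
  rw [sum_congr rfl fun u hu => mul_prod_erase C y hu, sum_const, nsmul_eq_mul]

variable [Fintype V]

lemma sum_linkMatrix_apply_mul (u v : V) (f : V → ℝ) :
    ∑ w, linkMatrix H u v w * f w =
      ∑ C ∈ H with u ∈ C ∧ v ∈ C.erase u, ∑ w ∈ (C.erase u).erase v, f w := by
  simp only [linkMatrix, of_apply, natCast_card_filter, sum_mul, ite_mul, one_mul, zero_mul]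
  rw [sum_comm, sum_filter]
  refine sum_congr rfl fun C _ => ?_
  by_cases h : u ∈ C ∧ v ∈ C.erase u
  · simp only [h.1, h.2, true_and, if_true, sum_ite_mem, univ_inter]
  · simp only [← and_assoc, h, false_and, if_false, sum_const_zero]

lemma sum_sum_erase (u : V) (g : Finset V → V → ℝ) :
    ∑ v, ∑ C ∈ H with u ∈ C ∧ v ∈ C.erase u, g C v =
      ∑ C ∈ H with u ∈ C, ∑ v ∈ C.erase u, g C v := by
  simp only [← filter_filter]
  exact sum_comm' fun v C => by simp only [mem_filter, mem_univ, true_and, and_comm]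

lemma rowWeight_linkMatrix (hH : ∀ C ∈ H, #C = 3) (u v : V) :
    rowWeight (linkMatrix H u) v = codegree H u v := by
  have h := sum_linkMatrix_apply_mul (H := H) u v 1
  simp only [Pi.one_apply, mul_one, sum_const, nsmul_eq_mul] at h
  simp only [rowWeight, abs_of_nonneg (linkMatrix_nonneg u v _)]
  rw [h, codegree_eq_card_filter_erase, card_eq_sum_ones, Nat.cast_sum]
  refine sum_congr rfl fun C hC => ?_
  rw [mem_filter] at hC
  rw [card_erase_of_mem hC.2.2, card_erase_of_mem hC.2.1, hH C hC.1]

lemma sum_codegree_le (hH : ∀ C ∈ H, #C = 3) (hdisj : (H : Set (Finset V)).Pairwise Disjoint)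
    (u : V) : ∑ v, codegree H u v ≤ 2 := by
  have hcard : ∑ v, codegree H u v = 2 * (#{C ∈ H | u ∈ C} : ℝ) := by
    have h := sum_sum_erase (H := H) u 1
    simp only [Pi.one_apply, sum_const, nsmul_eq_mul, mul_one] at h
    simp only [codegree_eq_card_filter_erase, h]
    rw [mul_comm, ← nsmul_eq_mul, ← sum_const]
    refine sum_congr rfl fun C hC => ?_
    rw [mem_filter] at hC
    rw [card_erase_of_mem hC.2, hH C hC.1]
    norm_num
  have : (#{C ∈ H | u ∈ C} : ℝ) ≤ 1 := by exact_mod_cast card_filter_mem_le_one hdisj u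
  linarith

/-- The quadratic form of the link of `u`, evaluated at `y`. -/
def linkForm (H : Finset (Finset V)) (y : V → ℝ) (u : V) : ℝ := y ⬝ᵥ linkMatrix H u *ᵥ y

lemma linkForm_eq (hH : ∀ C ∈ H, #C = 3) (u : V) (y : V → ℝ) :
    linkForm H y u = 2 * ∑ C ∈ H with u ∈ C, ∏ v ∈ C.erase u, y v := by
  simp only [linkForm, dotProduct, mulVec, sum_linkMatrix_apply_mul, mul_sum]
  rw [sum_sum_erase]
  refine sum_congr rfl fun C hC => ?_
  rw [mem_filter] at hC
  have hcard : #(C.erase u) = 2 := by rw [card_erase_of_mem hC.2, hH C hC.1]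
  have h := sum_mul_prod_erase (C.erase u) y
  rw [hcard, Nat.cast_ofNat] at h
  rw [← h]
  refine sum_congr rfl fun v hv => ?_
  obtain ⟨w, hw⟩ := card_eq_one.1 (by rw [card_erase_of_mem hv, hcard] : #((C.erase u).erase v) = 1)
  rw [hw, sum_singleton, prod_singleton]

lemma abs_linkForm_le (hH : ∀ C ∈ H, #C = 3)
    (hdisj : (H : Set (Finset V)).Pairwise Disjoint) (u : V) {y : V → ℝ} (hy : ∀ v, |y v| ≤ 1) :
    |linkForm H y u| ≤ 2 := by
  rw [linkForm_eq hH, abs_mul, abs_two]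
  have hsum : |∑ C ∈ H with u ∈ C, ∏ v ∈ C.erase u, y v| ≤ #{C ∈ H | u ∈ C} := by
    rw [card_eq_sum_ones, Nat.cast_sum]
    refine (abs_sum_le_sum_abs _ _).trans (sum_le_sum fun C _ => ?_)
    rw [abs_prod, Nat.cast_one]
    exact prod_le_one (fun _ _ => abs_nonneg _) fun v _ => hy v
  have : (#{C ∈ H | u ∈ C} : ℝ) ≤ 1 := by exact_mod_cast card_filter_mem_le_one hdisj u
  linarith

lemma sum_mul_linkForm (hH : ∀ C ∈ H, #C = 3) (y : V → ℝ) :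
    ∑ u, y u * linkForm H y u = 6 * ∑ C ∈ H, ∏ v ∈ C, y v :=
  calc ∑ u, y u * linkForm H y u
      = 2 * ∑ u, ∑ C ∈ H with u ∈ C, y u * ∏ v ∈ C.erase u, y v := by
        simp only [linkForm_eq hH, mul_sum, mul_left_comm]
    _ = 2 * ∑ C ∈ H, ∑ u ∈ C, y u * ∏ v ∈ C.erase u, y v := by
        congr 1
        exact sum_comm' fun u C => by simp only [mem_filter, mem_univ, true_and, and_comm]
    _ = 2 * ∑ C ∈ H, 3 * ∏ v ∈ C, y v := by
        congr 1
        refine sum_congr rfl fun C hC => ?_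
        rw [sum_mul_prod_erase, hH C hC, Nat.cast_ofNat]
    _ = 6 * ∑ C ∈ H, ∏ v ∈ C, y v := by
        rw [← mul_sum]
        ring

end Links

section DecoupledChaos

open Matrix
open scoped Kronecker

variable {ι V : Type*} [Fintype ι] [DecidableEq V] [Fintype V]

/-- The coefficients of the products of the link forms of `G` with those of the `H j` weighted by
`β j`, summed over the common vertex of the two links. -/
def linkProduct (G : Finset (Finset V)) (H : ι → Finset (Finset V)) (β : ι → ℝ) :
    Matrix (V × V) (V × V) ℝ :=
  ∑ j, β j • ∑ u, linkMatrix G u ⊗ₖ linkMatrix (H j) u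

variable {G : Finset (Finset V)} {H : ι → Finset (Finset V)} {β : ι → ℝ}

lemma linkProduct_isSymm : (linkProduct G H β).IsSymm := by
  simp only [IsSymm, linkProduct, transpose_sum, transpose_smul, ← kroneckerMap_transpose,
    (linkMatrix_isSymm _).eq]

omit [DecidableEq V] in
lemma pairSign_dotProduct_kronecker_mulVec (A B : Matrix V V ℝ) (x : V → Bool) :
    pairSign x ⬝ᵥ (A ⊗ₖ B) *ᵥ pairSign x =
      (pmo ∘ x ⬝ᵥ A *ᵥ (pmo ∘ x)) * (pmo ∘ x ⬝ᵥ B *ᵥ (pmo ∘ x)) := by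
  simp only [dotProduct, mulVec, Fintype.sum_prod_type, kroneckerMap_apply, pairSign,
    Function.comp_apply]
  rw [sum_mul_sum]
  refine sum_congr rfl fun v _ => sum_congr rfl fun v' _ => ?_
  rw [mul_mul_mul_comm (pmo (x v)), sum_mul_sum]
  simp only [mul_mul_mul_comm]

lemma pairSign_dotProduct_linkProduct_mulVec (x : V → Bool) :
    pairSign x ⬝ᵥ linkProduct G H β *ᵥ pairSign x =
      ∑ j, β j * ∑ u, linkForm G (pmo ∘ x) u * linkForm (H j) (pmo ∘ x) u := by
  simp only [linkProduct, sum_mulVec, dotProduct_sum, smul_mulVec, dotProduct_smul, smul_eq_mul,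
    pairSign_dotProduct_kronecker_mulVec, linkForm]

lemma rowWeight_linkProduct_le (hG : ∀ C ∈ G, #C = 3) (hH : ∀ j, ∀ C ∈ H j, #C = 3)
    (hβ : ∀ j, |β j| ≤ 1) (p : V × V) :
    rowWeight (linkProduct G H β) p ≤ ∑ u, codegree G u p.1 * ∑ j, codegree (H j) u p.2 :=
  calc rowWeight (linkProduct G H β) p
      ≤ ∑ j, |β j| * rowWeight (∑ u, linkMatrix G u ⊗ₖ linkMatrix (H j) u) p :=
        (rowWeight_sum_le _ _ _).trans_eq (sum_congr rfl fun j _ => rowWeight_smul _ _ _)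
    _ ≤ ∑ j, 1 * ∑ u, codegree G u p.1 * codegree (H j) u p.2 := by
        refine sum_le_sum fun j _ => mul_le_mul (hβ j) ?_ (rowWeight_nonneg _ _) zero_le_one
        refine (rowWeight_sum_le _ _ _).trans_eq (sum_congr rfl fun u _ => ?_)
        rw [rowWeight_kronecker, rowWeight_linkMatrix hG, rowWeight_linkMatrix (hH j)]
    _ = ∑ u, codegree G u p.1 * ∑ j, codegree (H j) u p.2 := by
        simp only [one_mul, mul_sum]
        rw [sum_comm]

lemma plantedDegree_linkProduct_le [Nonempty V] (hG : ∀ C ∈ G, #C = 3)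
    (hGdisj : (G : Set (Finset V)).Pairwise Disjoint) (hH : ∀ j, ∀ C ∈ H j, #C = 3)
    (hHdisj : ∀ j, (H j : Set (Finset V)).Pairwise Disjoint) {d : ℕ}
    (hd : ∀ u v, ∑ j, codegree (H j) u v ≤ d) (hβ : ∀ j, |β j| ≤ 1) {ℓ : ℕ} (hℓ : 1 ≤ ℓ)
    (hℓd : ℓ ^ 2 * min (2 * Fintype.card ι) (d * Fintype.card V) ≤ 2 * d * Fintype.card V)
    (p : V × V) : plantedDegree ℓ (linkProduct G H β) p ≤ 14 * d := by
  set e : V → V → ℝ := fun u v => ∑ j, codegree (H j) u v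
  have he_comm (u v : V) : e u v = e v u := sum_congr rfl fun j _ => codegree_comm u v
  set D : ℕ := min (2 * Fintype.card ι) (d * Fintype.card V) with hD
  have hesum (u : V) : ∑ v, e u v ≤ D := by
    rw [hD, Nat.cast_min, le_min_iff]
    constructor
    · rw [sum_comm]
      refine (sum_le_sum fun j _ => sum_codegree_le (hH j) (hHdisj j) u).trans_eq ?_
      simp [mul_comm]
    · refine (sum_le_sum fun v _ => hd u v).trans_eq ?_
      simp [mul_comm]
  have herow (u : V) : 𝔼 v, e u v ≤ D / Fintype.card V := by
    rw [Fintype.expect_eq_sum_div_card]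
    gcongr
    exact hesum u
  have hscale : (ℓ : ℝ) ^ 2 * (D / Fintype.card V) ≤ 2 * d := by
    rw [← mul_div_assoc, div_le_iff₀ (by positivity)]
    exact_mod_cast hℓd
  have hmain := plantedDegree_le (e := e) codegree_nonneg (sum_codegree_le hG hGdisj)
    (fun v => by simpa only [codegree_comm _ v] using sum_codegree_le hG hGdisj v)
    (fun u v => sum_nonneg fun j _ => codegree_nonneg u v) hd herow
    (fun v => by simpa only [he_comm _ v] using herow v)
    (rowWeight_linkProduct_le hG hH hβ) hℓ p
  linarith

lemma sq_mul_sqrt_le {n k ℓ L : ℝ} (hn : 0 ≤ n) (hk : 0 ≤ k) (hℓ : 0 ≤ ℓ) (hL : 0 ≤ L)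
    (hnℓ : n ≤ 4 * ℓ ^ 2 * k) :
    n ^ 2 * √(ℓ * L * k) ≤ 3 * ℓ ^ 2 * (n * k) * √(√(n * k) * L) := by
  have hsqrt : √n ≤ 2 * ℓ * √k := by
    rw [Real.sqrt_le_left (by positivity), mul_pow, Real.sq_sqrt hk]
    linarith
  have hsq : n ^ 2 ≤ 9 * ℓ ^ 3 * k * √(n * k) :=
    calc n ^ 2 = √n ^ 3 * √n := by rw [← pow_succ, pow_mul (√n) 2 2, Real.sq_sqrt hn]
      _ ≤ (2 * ℓ * √k) ^ 3 * √n := by gcongr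
      _ = 8 * ℓ ^ 3 * √k ^ 2 * √(n * k) := by rw [Real.sqrt_mul hn]; ring
      _ ≤ 9 * ℓ ^ 3 * k * √(n * k) := by rw [Real.sq_sqrt hk]; gcongr; norm_num
  refine le_of_pow_le_pow_left₀ two_ne_zero (by positivity) ?_
  rw [mul_pow, mul_pow, Real.sq_sqrt (by positivity), Real.sq_sqrt (by positivity)]
  calc (n ^ 2) ^ 2 * (ℓ * L * k) = n ^ 2 * (n ^ 2 * (ℓ * L * k)) := by ring
    _ ≤ n ^ 2 * (9 * ℓ ^ 3 * k * √(n * k) * (ℓ * L * k)) := by gcongr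
    _ = (3 * ℓ ^ 2 * (n * k)) ^ 2 * (√(n * k) * L) := by ring

lemma exp_one_mul_sqrt_le {M N : ℝ} (hN : 0 ≤ N) (hM : M ≤ 4 * N) :
    Real.exp 1 * √(M * Real.exp 1) ≤ 9 * √N :=
  have he : 4 * Real.exp 1 ^ 3 ≤ 9 ^ 2 :=
    calc 4 * Real.exp 1 ^ 3 ≤ 4 * 2.719 ^ 3 := by gcongr; linarith [Real.exp_one_lt_d9]
      _ ≤ 9 ^ 2 := by norm_num
  calc Real.exp 1 * √(M * Real.exp 1) ≤ Real.exp 1 * √(4 * N * Real.exp 1) := by gcongr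
    _ = √(4 * Real.exp 1 ^ 3 * N) := by
        rw [← Real.sqrt_sq (Real.exp_pos 1).le, ← Real.sqrt_mul (by positivity),
          Real.sqrt_sq (Real.exp_pos 1).le]
        ring_nf
    _ ≤ √(9 ^ 2 * N) := by gcongr
    _ = 9 * √N := by rw [Real.sqrt_mul (by norm_num), Real.sqrt_sq (by norm_num)]

variable [DecidableEq ι] [Nonempty ι] [Nontrivial V]

lemma expect_decoupled_chaos_le (hH : ∀ i, ∀ C ∈ H i, #C = 3)
    (hdisj : ∀ i, (H i : Set (Finset V)).Pairwise Disjoint) {d : ℕ} (hd₀ : 0 < d)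
    (hd : ∀ u v, ∑ j, codegree (H j) u v ≤ d) {β : ι → ι → ℝ} (hβ : ∀ i j, |β i j| ≤ 1)
    (x : (ι → Bool) → V → Bool) :
    𝔼 ε, ∑ i, pmo (ε i) * ∑ j, β i j *
        ∑ u, linkForm (H i) (pmo ∘ x ε) u * linkForm (H j) (pmo ∘ x ε) u ≤
      3024 * d * (Fintype.card V * Fintype.card ι) *
        √(√(Fintype.card V * Fintype.card ι) * Real.log (Fintype.card V)) := by
  obtain ⟨ℓ, hℓ, hℓd, hVℓ⟩ :=
    exists_tuple_length (n := Fintype.card V) (Fintype.card_pos (α := ι)) hd₀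
  obtain ⟨m, hVm, hm⟩ := exists_moment (Fintype.one_lt_card (α := V)) hℓ
  set n : ℝ := (Fintype.card V : ℝ)
  set k : ℝ := (Fintype.card ι : ℝ)
  have hnℓ : n ≤ 4 * ℓ ^ 2 * k := by
    simp only [n, k]
    exact_mod_cast hVℓ
  have : Nonempty (Fin ℓ) := ⟨⟨0, hℓ⟩⟩
  have hchaos := expect_sum_pmo_mul_pairSign_le (κ := Fin ℓ) (γ := 14 * d) (by positivity)
    (c := fun i => linkProduct (H i) H (β i)) (fun i => linkProduct_isSymm)
    (fun i => by
      rw [Fintype.card_fin]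
      exact plantedDegree_linkProduct_le (hH i) (hdisj i) hH hdisj hd (hβ i) hℓ hℓd)
    x (m := m) (by rwa [Fintype.card_fin])
  simp only [pairSign_dotProduct_linkProduct_mulVec, Fintype.card_fin] at hchaos
  have hsqrt : Real.exp 1 * √(2 ^ (m + 1) * k * Real.exp 1) ≤ 9 * √(ℓ * Real.log n * k) :=
    exp_one_mul_sqrt_le (by positivity) (by rw [← mul_assoc]; gcongr)
  refine hchaos.trans ?_
  calc n ^ 2 / ℓ ^ 2 * (8 * (14 * d) * (Real.exp 1 * √(2 ^ (m + 1) * k * Real.exp 1)))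
      ≤ n ^ 2 / ℓ ^ 2 * (8 * (14 * d) * (9 * √(ℓ * Real.log n * k))) := by gcongr
    _ = 1008 * d / ℓ ^ 2 * (n ^ 2 * √(ℓ * Real.log n * k)) := by ring
    _ ≤ 1008 * d / ℓ ^ 2 * (3 * ℓ ^ 2 * (n * k) * √(√(n * k) * Real.log n)) := by
        refine mul_le_mul_of_nonneg_left (sq_mul_sqrt_le ?_ ?_ ?_ ?_ hnℓ) ?_ <;> positivity
    _ = 3024 * d * (n * k) * √(√(n * k) * Real.log n) := by
        field_simp
        ring

end DecoupledChaos

section Refutation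

variable {ι V : Type*} [Fintype ι] [DecidableEq V] [Fintype V]

/-- The 3-XOR polynomial `f_b` of the hypergraphs `H i` with signs `b`. -/
def xorForm (H : ι → Finset (Finset V)) (b : ι → Bool) (x : V → Bool) : ℝ :=
  ∑ i, pmo (b i) * ∑ C ∈ H i, ∏ v ∈ C, pmo (x v)

variable {H : ι → Finset (Finset V)}

lemma six_mul_xorForm (hH : ∀ i, ∀ C ∈ H i, #C = 3) (b : ι → Bool) (x : V → Bool) :
    6 * xorForm H b x = ∑ u, pmo (x u) * ∑ i, pmo (b i) * linkForm (H i) (pmo ∘ x) u := by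
  simp only [xorForm, mul_sum univ]
  rw [sum_comm]
  refine sum_congr rfl fun i _ => ?_
  rw [mul_left_comm, ← sum_mul_linkForm (hH i) fun v => pmo (x v), mul_sum]
  exact sum_congr rfl fun u _ => mul_left_comm _ _ _

variable [DecidableEq ι]

omit [DecidableEq V] in
lemma sum_sq_sum_pmo_mul_le {L : ι → V → ℝ} {R : ℝ} (hL : ∀ i u, |L i u| ≤ R) (b : ι → Bool) :
    ∑ u, (∑ i, pmo (b i) * L i u) ^ 2 ≤ R ^ 2 * (Fintype.card V * Fintype.card ι) +
      ∑ i, ∑ j ∈ univ.erase i, pmo (b i) * pmo (b j) * ∑ u, L i u * L j u := by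
  have hdiag (i : ι) : pmo (b i) * pmo (b i) * ∑ u, L i u * L i u ≤ R ^ 2 * Fintype.card V := by
    rw [← sq, pmo_sq, one_mul, mul_comm, ← nsmul_eq_mul, ← card_univ]
    refine sum_le_card_nsmul _ _ _ fun u _ => ?_
    rw [← sq, ← sq_abs]
    exact pow_le_pow_left₀ (abs_nonneg _) (hL i u) 2
  calc ∑ u, (∑ i, pmo (b i) * L i u) ^ 2
      = ∑ i, ∑ j, pmo (b i) * pmo (b j) * ∑ u, L i u * L j u := by
        simp only [sq, sum_mul_sum]
        rw [sum_comm]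
        refine sum_congr rfl fun i _ => sum_comm.trans (sum_congr rfl fun j _ => ?_)
        simp only [mul_sum, mul_mul_mul_comm]
    _ = ∑ i, pmo (b i) * pmo (b i) * ∑ u, L i u * L i u +
          ∑ i, ∑ j ∈ univ.erase i, pmo (b i) * pmo (b j) * ∑ u, L i u * L j u := by
        rw [← sum_add_distrib]
        exact sum_congr rfl fun i _ => (add_sum_erase _ _ (mem_univ i)).symm
    _ ≤ _ := by
        gcongr
        refine (sum_le_card_nsmul _ _ _ fun i _ => hdiag i).trans_eq ?_
        rw [card_univ, nsmul_eq_mul]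
        ring

lemma sq_six_mul_xorForm_le (hH : ∀ i, ∀ C ∈ H i, #C = 3)
    (hdisj : ∀ i, (H i : Set (Finset V)).Pairwise Disjoint) (b : ι → Bool) (x : V → Bool) :
    (6 * xorForm H b x) ^ 2 ≤ Fintype.card V * (2 ^ 2 * (Fintype.card V * Fintype.card ι) +
      ∑ i, ∑ j ∈ univ.erase i, pmo (b i) * pmo (b j) *
        ∑ u, linkForm (H i) (pmo ∘ x) u * linkForm (H j) (pmo ∘ x) u) :=
  calc (6 * xorForm H b x) ^ 2
      ≤ (∑ u, pmo (x u) ^ 2) * ∑ u, (∑ i, pmo (b i) * linkForm (H i) (pmo ∘ x) u) ^ 2 := by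
        rw [six_mul_xorForm hH]
        exact sum_mul_sq_le_sq_mul_sq _ _ _
    _ = Fintype.card V * ∑ u, (∑ i, pmo (b i) * linkForm (H i) (pmo ∘ x) u) ^ 2 := by
        simp only [pmo_sq, sum_const, card_univ, nsmul_eq_mul, mul_one]
    _ ≤ _ := by
        gcongr
        exact sum_sq_sum_pmo_mul_le
          (fun i u => abs_linkForm_le (hH i) (hdisj i) u fun v => (abs_pmo (x v)).le) b

lemma half_le_sqrt_sqrt_mul_log {n k : ℝ} (hn : 2 ≤ n) (hk : 1 ≤ k) :
    1 / 2 ≤ √(√(n * k) * Real.log n) := by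
  have hlog : 1 / 2 ≤ Real.log n :=
    (by linarith [Real.log_two_gt_d9] : 1 / 2 ≤ Real.log 2).trans (Real.log_le_log two_pos hn)
  have hsqrt : 1 ≤ √(n * k) := Real.one_le_sqrt.2 (by nlinarith)
  exact Real.le_sqrt_of_sq_le (by nlinarith)

variable [Nonempty ι] [Nontrivial V]

lemma sq_expect_iSup_xorForm_le (hH : ∀ i, ∀ C ∈ H i, #C = 3)
    (hdisj : ∀ i, (H i : Set (Finset V)).Pairwise Disjoint) {d : ℕ} (hd₀ : 0 < d)
    (hd : ∀ u v, ∑ i, codegree (H i) u v ≤ d) :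
    (𝔼 b, ⨆ x, xorForm H b x) ^ 2 ≤ 20 ^ 2 * (Fintype.card V ^ 2 * Fintype.card ι * d *
      √(√(Fintype.card V * Fintype.card ι) * Real.log (Fintype.card V))) := by
  choose x hx using fun b => exists_eq_ciSup_of_finite (f := xorForm H b)
  have hchaos := expect_offDiag_chaos_le
    (F := fun i j x => ∑ u, linkForm (H i) (pmo ∘ x) u * linkForm (H j) (pmo ∘ x) u)
    (fun β hβ x => expect_decoupled_chaos_le hH hdisj hd₀ hd hβ x) x
  set n : ℝ := (Fintype.card V : ℝ)
  set k : ℝ := (Fintype.card ι : ℝ)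
  set W := √(√(n * k) * Real.log n)
  have hW : 1 / 2 ≤ d * W :=
    (half_le_sqrt_sqrt_mul_log (Nat.ofNat_le_cast.2 Fintype.one_lt_card)
      (Nat.one_le_cast.2 Fintype.card_pos)).trans
      (le_mul_of_one_le_left (Real.sqrt_nonneg _) (by exact_mod_cast hd₀))
  have hsecond : 36 * (𝔼 b, ⨆ x, xorForm H b x) ^ 2 ≤
      n * (2 ^ 2 * (n * k) + 4 * (3024 * d * (n * k) * W)) :=
    calc 36 * (𝔼 b, ⨆ x, xorForm H b x) ^ 2 ≤ 36 * 𝔼 b, xorForm H b (x b) ^ 2 := by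
          simp only [← hx]
          gcongr
          exact pow_expect_le_expect_pow_of_even _ even_two
      _ = 𝔼 b, (6 * xorForm H b (x b)) ^ 2 := by
          rw [mul_expect]
          refine expect_congr rfl fun b _ => ?_
          ring
      _ ≤ _ := (expect_le_expect fun b _ => sq_six_mul_xorForm_le hH hdisj b (x b))
      _ ≤ n * (2 ^ 2 * (n * k) + 4 * (3024 * d * (n * k) * W)) := by
          rw [← mul_expect, expect_add_distrib, Fintype.expect_const]
          gcongr
  have hnk : n ^ 2 * k * (1 / 2) ≤ n ^ 2 * k * (d * W) := by gcongr
  have hmain : 0 ≤ n ^ 2 * k * (d * W) := by positivity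
  linarith

lemma sq_rpow_mul_rpow_eq_sqrt {a l : ℝ} (ha : 0 ≤ a) (hl : 0 ≤ l) :
    (a ^ ((1 : ℝ) / 8) * l ^ ((1 : ℝ) / 4)) ^ 2 = √(√a * l) := by
  rw [mul_pow, Real.sqrt_mul (by positivity), Real.sqrt_eq_rpow, Real.sqrt_eq_rpow,
    Real.sqrt_eq_rpow, ← Real.rpow_mul ha, ← Real.rpow_mul_natCast ha, ← Real.rpow_mul_natCast hl]
  norm_num

end Refutation

theorem three_xor_refutation_general {ι V : Type*} [Fintype ι] [DecidableEq ι] [Nonempty ι]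
    [Fintype V] [DecidableEq V] [Nontrivial V] {H : ι → Finset (Finset V)}
    (hH : ∀ i, ∀ C ∈ H i, #C = 3)
    (hdisj : ∀ i, (H i : Set (Finset V)).Pairwise Disjoint) {d : ℕ} (hd₀ : 0 < d)
    (hd : ∀ u v, u ≠ v → ∑ i, #{C ∈ H i | {u, v} ⊆ C} ≤ d) :
    𝔼 b : ι → Bool, ⨆ x : V → Bool, ∑ i, pmo (b i) * ∑ C ∈ H i, ∏ v ∈ C, pmo (x v) ≤
      20 * Fintype.card V * √(Fintype.card ι) * √d *
        ((Fintype.card V : ℝ) * Fintype.card ι) ^ ((1 : ℝ) / 8) *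
        Real.log (Fintype.card V) ^ ((1 : ℝ) / 4) := by
  have hcodegree (u v : V) : ∑ i, codegree (H i) u v ≤ d := by
    by_cases huv : u = v
    · simp [codegree, huv]
    · simp only [codegree, huv, if_false]
      exact_mod_cast hd u v huv
  have hroot := sq_rpow_mul_rpow_eq_sqrt
    (a := (Fintype.card V : ℝ) * Fintype.card ι) (l := Real.log (Fintype.card V))
    (by positivity) (by positivity)
  refine le_of_pow_le_pow_left₀ two_ne_zero (by positivity)
    ((sq_expect_iSup_xorForm_le hH hdisj hd₀ hcodegree).trans_eq ?_)
  rw [← hroot]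
  simp only [mul_pow, Real.sq_sqrt (Nat.cast_nonneg _)]
  ring

/-- **3-XOR refutation.** There is an absolute constant `c > 0` such that: if
`H 1, …, H k` are `3`-uniform hypergraph matchings on `[n]` in which every pair
`{u,v}` is contained in at most `d` hyperedges (over all `i`), then with
`f_b(x) = Σᵢ b_i Σ_{C ∈ H i} ∏_{v ∈ C} x_v` and `val(f_b) = max_{x ∈ {-1,1}ⁿ} f_b(x)`,
the expectation of `val(f_b)` over uniform `b ∈ {-1,1}^k` is at most
`c · n · √k · d · (nk)^{1/8} · (log n)^{1/4}`. -/
theorem three_xor_refutation :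
    ∃ c : ℝ, 0 < c ∧
      ∀ (n k d : ℕ), 2 ≤ n → 0 < k → 0 < d →
      ∀ H : Fin k → Finset (Finset (Fin n)),
        (∀ i, IsMatching 3 (H i)) →
        (∀ u v : Fin n, u ≠ v →
          ∑ i, ((H i).filter (fun C => {u, v} ⊆ C)).card ≤ d) →
        (∑ b : Fin k → Bool,
            ⨆ x : Fin n → Bool,
              ∑ i, pmo (b i) * ∑ C ∈ H i, ∏ v ∈ C, pmo (x v)) / 2 ^ k
          ≤ c * n * Real.sqrt k * d * ((n : ℝ) * k) ^ ((1 : ℝ) / 8) *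
              Real.log n ^ ((1 : ℝ) / 4) := by
  refine ⟨20, by norm_num, fun n k d hn hk hd H hH hpair => ?_⟩
  have : Nonempty (Fin k) := ⟨⟨0, hk⟩⟩
  have : Nontrivial (Fin n) := Fin.nontrivial_iff_two_le.2 hn
  have hd_sqrt : √(d : ℝ) ≤ d := Real.sqrt_le_self_iff.2 (.inr (by exact_mod_cast hd))
  have hgeneral := three_xor_refutation_general (fun i => (hH i).1) (fun i => (hH i).2) hd hpair
  rw [Fintype.expect_eq_sum_div_card, Fintype.card_fun, Fintype.card_bool, Fintype.card_fin,
    Fintype.card_fin, Nat.cast_pow, Nat.cast_ofNat] at hgeneral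
  refine hgeneral.trans ?_
  gcongr
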